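/- Let U be a strongly continuous unitary representation of ℝ^{s+1} with spectral measure E_w, D a dense subspace of H, and S ⊆ ℝ^{s+1} a closed set. If for every ψ, φ ∈ D and every g ∈ L¹(ℝ^{s+1}) with supp g̃ ∩ S = ∅ one has ∫ g(x)⟨ψ, U(x)φ⟩ dx = 0, then E_w(complement of S) = 0, i.e., the spectrum of the generator is contained in S. -/

import Mathlib

open MeasureTheory
open scoped InnerProductSpace

/-- The Fourier transform on `ℝ^n` with the symmetric normalization,
`g̃(p) = (2π)^{-n/2} ∫ g(x) e^{i⟨x,p⟩} dx` (sign convention fixed as in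
Stone's theorem `U(x) = ∫ e^{ipx} dE(p)`). -/
noncomputable def symmFT {n : ℕ} (g : EuclideanSpace ℝ (Fin n) → ℂ)
    (p : EuclideanSpace ℝ (Fin n)) : ℂ :=
  (((2 * Real.pi) ^ (-(n : ℝ) / 2) : ℝ) : ℂ) *
    ∫ x, Complex.exp (Complex.I * (⟪x, p⟫_ℝ : ℂ)) * g x

open scoped FourierTransform ContDiff in
theorem exists_integrable_ft {n : ℕ} (c : EuclideanSpace ℝ (Fin n)) (f : ContDiffBump c) :
    ∃ g : EuclideanSpace ℝ (Fin n) → ℂ, Integrable g ∧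
      ∀ p, ∫ x, Complex.exp (Complex.I * (⟪x, p⟫_ℝ : ℂ)) * g x = ((f p : ℝ) : ℂ) := by
  have h2 : (2 * Real.pi) ≠ 0 := by positivity
  let F : EuclideanSpace ℝ (Fin n) → ℂ := fun q => ((f ((2 * Real.pi) • q) : ℝ) : ℂ)
  have hFs : ContDiff ℝ ∞ F :=
    Complex.ofRealCLM.contDiff.comp (f.contDiff.comp (contDiff_const_smul (2 * Real.pi)))
  have hFc : HasCompactSupport F := by
    have h1 : HasCompactSupport (fun q => f ((2 * Real.pi) • q)) :=
      f.hasCompactSupport.comp_homeomorph (Homeomorph.smulOfNeZero (2 * Real.pi) h2)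
    exact h1.comp_left (g := fun r : ℝ => (r : ℂ)) (by simp)
  let G := hFc.toSchwartzMap hFs
  let K : SchwartzMap (EuclideanSpace ℝ (Fin n)) ℂ := 𝓕 G
  refine ⟨fun x => K x, K.integrable, fun p => ?_⟩
  have hinv : 𝓕⁻ K = G := FourierTransform.fourierInv_fourier_eq G
  have h3 := congrArg (fun L : SchwartzMap (EuclideanSpace ℝ (Fin n)) ℂ => L ((2 * Real.pi)⁻¹ • p)) hinv
  simp only [SchwartzMap.fourierInv_coe, Real.fourierInv_eq'] at h3
  have h4 : G ((2 * Real.pi)⁻¹ • p) = ((f p : ℝ) : ℂ) := by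
    change F _ = _
    simp only [F, smul_inv_smul₀ h2]
  rw [← h4, ← h3]
  congr 1
  ext x
  rw [inner_smul_right, mul_inv_cancel_left₀ h2, mul_comm Complex.I, smul_eq_mul]

theorem fubini_ft {n : ℕ} (ν : Measure (EuclideanSpace ℝ (Fin n))) [IsFiniteMeasure ν]
    (g : EuclideanSpace ℝ (Fin n) → ℂ) (hg : Integrable g) :
    ∫ x, g x * ∫ p, Complex.exp (Complex.I * (⟪p, x⟫_ℝ : ℂ)) ∂ν =
      ∫ p, (∫ x, Complex.exp (Complex.I * (⟪x, p⟫_ℝ : ℂ)) * g x) ∂ν := by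
  simp_rw [← integral_const_mul]
  rw [integral_integral_swap]
  · congr 1
    ext p
    congr 1
    ext x
    rw [mul_comm, real_inner_comm]
  · have h1 : Integrable (fun z : EuclideanSpace ℝ (Fin n) × EuclideanSpace ℝ (Fin n) => g z.1)
        (volume.prod ν) := hg.comp_fst ν
    refine h1.mul_bdd (c := 1) ?_ ?_
    · apply Continuous.aestronglyMeasurable
      fun_prop
    · refine Filter.Eventually.of_forall fun z => ?_
      rw [mul_comm, Complex.norm_exp_ofReal_mul_I]

/-- Let `U` be a unitary representation of `ℝ^{s+1}` with
spectral measure `E_w`, described weakly by the diagonal scalar measures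
`μ ψ = ⟪ψ, E_w(·) ψ⟫` (so `μ ψ (univ) = ‖ψ‖²`, `‖E_w(Δ)ψ‖² = μ ψ Δ` and
`⟪ψ, U x ψ⟫ = ∫ e^{i⟨p,x⟩} dμψ(p)`).  Let `D ⊆ H` be dense and `S ⊆ ℝ^{s+1}`
closed.  If for all `ψ, φ ∈ D` and all `g ∈ L¹` with `supp g̃ ∩ S = ∅` one has
`∫ g(x) ⟪ψ, U x φ⟫ dx = 0`, then `E_w(Sᶜ) = 0`, i.e. the spectrum of the
generator is contained in `S`. -/
theorem stmt13 {s : ℕ} {H : Type*} [NormedAddCommGroup H]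
    [InnerProductSpace ℂ H] [CompleteSpace H]
    (U : EuclideanSpace ℝ (Fin (s + 1)) → (H →L[ℂ] H))
    (hUnit : ∀ x, star (U x) * U x = 1 ∧ U x * star (U x) = 1)
    (E : Set (EuclideanSpace ℝ (Fin (s + 1))) → (H →L[ℂ] H))
    (μ : H → Measure (EuclideanSpace ℝ (Fin (s + 1))))
    (hμfin : ∀ ψ : H, μ ψ Set.univ = ENNReal.ofReal (‖ψ‖ ^ 2))
    (hU : ∀ (ψ : H) (x : EuclideanSpace ℝ (Fin (s + 1))),
      ⟪ψ, U x ψ⟫_ℂ = ∫ p, Complex.exp (Complex.I * (⟪p, x⟫_ℝ : ℂ)) ∂(μ ψ))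
    (hE : ∀ (ψ : H) (Δ : Set (EuclideanSpace ℝ (Fin (s + 1)))),
      MeasurableSet Δ → ‖E Δ ψ‖ ^ 2 = (μ ψ Δ).toReal)
    (D : Set H) (hD : Dense D)
    (S : Set (EuclideanSpace ℝ (Fin (s + 1)))) (hS : IsClosed S)
    (hvanish : ∀ ψ ∈ D, ∀ φ ∈ D,
      ∀ g : EuclideanSpace ℝ (Fin (s + 1)) → ℂ, Integrable g →
        Function.support (symmFT g) ∩ S = ∅ →
        ∫ x, g x * ⟪ψ, U x φ⟫_ℂ = 0) :
    E Sᶜ = 0 := by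
  have hfin : ∀ ψ, IsFiniteMeasure (μ ψ) := fun ψ => ⟨by rw [hμfin]; exact ENNReal.ofReal_lt_top⟩
  have key : ∀ ψ ∈ D, μ ψ Sᶜ = 0 := by
    intro ψ hψ
    haveI := hfin ψ
    refine measure_null_of_locally_null _ fun c hc => ?_
    obtain ⟨r, hr, hball⟩ := Metric.isOpen_iff.1 hS.isOpen_compl c hc
    let f : ContDiffBump c := ⟨r / 2, r, by positivity, by linarith⟩
    have hsupp : Function.support f = Metric.ball c r := f.support_eq
    obtain ⟨g, hg, hgf⟩ := exists_integrable_ft c f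
    have hv := hvanish ψ hψ ψ hψ g hg (by
      ext p
      simp only [Set.mem_inter_iff, Function.mem_support, symmFT, hgf, Set.mem_empty_iff_false,
        iff_false, not_and]
      intro h hp
      have : p ∈ Function.support f := by
        rw [Function.mem_support]
        intro h0
        apply h
        rw [h0]; simp
      rw [hsupp] at this
      exact hball this hp)
    simp_rw [hU] at hv
    rw [fubini_ft _ _ hg] at hv
    simp_rw [hgf] at hv
    rw [integral_complex_ofReal, Complex.ofReal_eq_zero] at hv
    have hint : Integrable f (μ ψ) :=
      f.continuous.integrable_of_hasCompactSupport f.hasCompactSupport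
    rw [integral_eq_zero_iff_of_nonneg f.nonneg' hint] at hv
    refine ⟨Metric.ball c r, mem_nhdsWithin_of_mem_nhds (Metric.ball_mem_nhds c hr), ?_⟩
    rw [← hsupp]
    exact hv
  have hz : ∀ ψ ∈ D, E Sᶜ ψ = 0 := by
    intro ψ hψ
    have := hE ψ Sᶜ hS.measurableSet.compl
    rw [key ψ hψ] at this
    simpa using this
  have := Continuous.ext_on hD (E Sᶜ).continuous (0 : H →L[ℂ] H).continuous
    (fun ψ hψ => by simpa using hz ψ hψ)
  exact DFunLike.coe_injective this
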